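/- (Spike-variation trajectory estimate.) Consider the control system ^C D^α_{0+} y(t) = f(t, y(t), y(t−h), u(t)) a.e. on [0,T], y(0) = y₀, y(t) = φ(t) for −h ≤ t < 0, with f satisfying (C1), 0 < α < 1. Let (u, y) be an admissible pair, let v ∈ U, let θ ∈ [0,T) with θ + ε < T, and define the spike variation u_ε(t) = v for t ∈ [θ, θ+ε) and u_ε(t) = u(t) otherwise; let y_ε be the corresponding trajectory and Δy = y_ε − y. Then: (i) Δy(t) = 0 for −h ≤ t ≤ θ; (ii) there is a constant M > 0 independent of ε such that, with K(v) = ess sup_{t∈[0,T]} ‖f(t,y(t),y(t−h),v) − f(t,y(t),y(t−h),u(t))‖, one has ‖Δy(t)‖ ≤ (M K(v)/Γ(α+1)) (t−θ)^α for all θ ≤ t ≤ θ+ε; in particular ‖Δy(t)‖ ≤ (M K(v)/Γ(α+1)) ε^α on [θ, θ+ε]. -/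

import Mathlib

/-!
The trajectory estimate is a Gronwall argument for the Abel kernel.

An admissible `y` is of the form `y 0 + I^α g` with `g` bounded. Since `I^{1-α} I^α = I^1`
(`integral_abel_comp`: Fubini and the Beta integral `B(α, 1-α) = Γ(α) Γ(1-α)`), the Lebesgue
differentiation theorem identifies the Caputo derivative with `g` almost everywhere
(`caputoD_ae_eq`), so the state equation says `g = f(·, y, y(· - h), u)` a.e. Subtracting the two
Volterra equations, `a = ‖yε - y‖` satisfies `a ≤ I^α G`, where
`G(t) ≤ K 1_{t ≥ θ} + L (a(t) + a(t - h))` by the Lipschitz condition.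

The inequality `abel_gronwall` is proved with the weight `(t - s)^α e^{l (t - s)}`. Because
`∫_s^t (t - τ)^{α-1} e^{l (τ - s)} dτ ≤ Γ(α) l^{-α} e^{l (t - s)}`, a large `l` makes the Volterra
operator, delay included, a contraction with factor `1/2` for this weight. On `[0, θ]` the source
term is zero, hence `a = 0` there; the integral then starts at `θ`, and a second application of
`abel_gronwall` on `[θ, θ + ε]` gives the bound with `M = 2 e^{l T}`, which depends on neither `ε`
nor the perturbed trajectory.
-/

open MeasureTheory Set Filter Topology

/-- The Riemann–Liouville fractional integral of order `α` based at `0`. -/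
noncomputable def RLint {E : Type*} [NormedAddCommGroup E] [NormedSpace ℝ E]
    (α : ℝ) (φ : ℝ → E) (t : ℝ) : E :=
  (Real.Gamma α)⁻¹ • ∫ τ in (0:ℝ)..t, ((t - τ) ^ (α - 1)) • φ τ

/-- The Caputo fractional derivative of order `α` based at `0`, realized as the
Riemann–Liouville derivative of `y - y 0`. -/
noncomputable def caputoD {E : Type*} [NormedAddCommGroup E] [NormedSpace ℝ E]
    (α : ℝ) (y : ℝ → E) (t : ℝ) : E :=
  deriv (fun s => (Real.Gamma (1 - α))⁻¹ • ∫ τ in (0:ℝ)..s, ((s - τ) ^ (-α)) • (y τ - y 0)) t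

/-- `(u, y)` is an admissible process of the Caputo fractional time-delay control system. -/
def Admissible {n r : ℕ} (α T h : ℝ)
    (f : ℝ → (Fin n → ℝ) → (Fin n → ℝ) → (Fin r → ℝ) → (Fin n → ℝ))
    (U : Set (Fin r → ℝ)) (y₀ : Fin n → ℝ) (φini : ℝ → (Fin n → ℝ))
    (u : ℝ → (Fin r → ℝ)) (y : ℝ → (Fin n → ℝ)) : Prop :=
  AEStronglyMeasurable u (volume.restrict (Icc (0:ℝ) T)) ∧
  (∀ t ∈ Icc (0:ℝ) T, u t ∈ U) ∧
  (∃ g : ℝ → (Fin n → ℝ), AEStronglyMeasurable g (volume.restrict (Icc (0:ℝ) T)) ∧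
      (∃ C : ℝ, ∀ᵐ t ∂(volume.restrict (Icc (0:ℝ) T)), ‖g t‖ ≤ C) ∧
      ∀ t ∈ Icc (0:ℝ) T, y t = y 0 + RLint α g t) ∧
  (∀ᵐ t ∂(volume.restrict (Icc (0:ℝ) T)),
      caputoD α y t = f t (y t) (y (t - h)) (u t)) ∧
  y 0 = y₀ ∧ (∀ t ∈ Ico (-h) (0:ℝ), y t = φini t)

/-- The spike (needle) variation of the control `u`: equal to `v` on `[θ, θ+ε)` and to `u`
elsewhere. -/
noncomputable def spike {r : ℕ} (u : ℝ → (Fin r → ℝ)) (v : Fin r → ℝ) (θ ε t : ℝ) :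
    Fin r → ℝ :=
  if θ ≤ t ∧ t < θ + ε then v else u t


/-! ### Abel kernels and the Caputo derivative -/

/-- The Abel kernel `x ↦ x ^ (β - 1)` on `(0, ∞)`, extended by zero to the whole line. -/
noncomputable def abelKer (β x : ℝ) : ℝ := (Ioi (0:ℝ)).indicator (fun x => x ^ (β - 1)) x

lemma abelKer_measurable (β : ℝ) : Measurable (abelKer β) :=
  Measurable.indicator (measurable_id.pow_const _) measurableSet_Ioi

lemma abelKer_nonneg (β x : ℝ) : 0 ≤ abelKer β x :=
  indicator_nonneg (fun _ hx => Real.rpow_nonneg (le_of_lt hx) _) _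

lemma abelKer_of_pos {β x : ℝ} (hx : 0 < x) : abelKer β x = x ^ (β - 1) :=
  indicator_of_mem (show x ∈ Ioi (0:ℝ) from hx) _

lemma abelKer_of_nonpos {β x : ℝ} (hx : x ≤ 0) : abelKer β x = 0 :=
  indicator_of_notMem (by simpa using hx) _

lemma integral_beta_real {α : ℝ} (hα0 : 0 < α) (hα1 : α < 1) {a : ℝ} (ha : 0 < a) :
    ∫ x in (0:ℝ)..a, x ^ (α - 1) * (a - x) ^ (-α) = Real.Gamma α * Real.Gamma (1 - α) := by
  have h1 := Complex.betaIntegral_scaled (α : ℂ) ((1 - α : ℝ) : ℂ) ha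
  have h2 := Complex.Gamma_mul_Gamma_eq_betaIntegral (s := (α : ℂ)) (t := ((1 - α : ℝ) : ℂ))
    (by simpa using hα0) (by simpa using hα1)
  have h3 : (α : ℂ) + ((1 - α : ℝ) : ℂ) = 1 := by push_cast; ring
  rw [h3] at h1 h2
  rw [Complex.Gamma_one, one_mul, Complex.Gamma_ofReal, Complex.Gamma_ofReal] at h2
  rw [sub_self, Complex.cpow_zero, one_mul, ← h2] at h1
  apply Complex.ofReal_injective
  rw [← intervalIntegral.integral_ofReal]
  push_cast
  rw [← h1]
  apply intervalIntegral.integral_congr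
  intro x hx
  rw [uIcc_of_le ha.le] at hx
  dsimp only
  rw [Complex.ofReal_cpow hx.1, Complex.ofReal_cpow (by linarith [hx.2])]
  push_cast
  congr 2
  ring

/-- The convolution of the Abel kernels of orders `1 - α` and `α` is constant on `(0, ∞)`. -/
lemma integral_abelKer_mul {α : ℝ} (hα0 : 0 < α) (hα1 : α < 1) {σ s : ℝ} (h : σ < s) :
    ∫ τ, abelKer (1 - α) (s - τ) * abelKer α (τ - σ) =
      Real.Gamma α * Real.Gamma (1 - α) := by
  have h1 : (fun τ => abelKer (1 - α) (s - τ) * abelKer α (τ - σ)) =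
      (Ioo σ s).indicator (fun τ => (τ - σ) ^ (α - 1) * ((s - σ) - (τ - σ)) ^ (-α)) := by
    funext τ
    by_cases hτ : τ ∈ Ioo σ s
    · rw [indicator_of_mem hτ, abelKer_of_pos (by linarith [hτ.2]),
        abelKer_of_pos (by linarith [hτ.1]), mul_comm]
      congr 2 <;> ring
    · rw [indicator_of_notMem hτ]
      rcases not_and_or.1 hτ with h' | h'
      · rw [abelKer_of_nonpos (x := τ - σ) (by linarith), mul_zero]
      · rw [abelKer_of_nonpos (x := s - τ) (by linarith), zero_mul]
  rw [h1, integral_indicator measurableSet_Ioo, ← integral_Ioc_eq_integral_Ioo,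
    ← intervalIntegral.integral_of_le h.le,
    intervalIntegral.integral_comp_sub_right
      (fun x => x ^ (α - 1) * ((s - σ) - x) ^ (-α)) σ, sub_self,
    integral_beta_real hα0 hα1 (by linarith)]

lemma integrable_abelKer_mul {α : ℝ} (hα0 : 0 < α) (hα1 : α < 1) (σ s : ℝ) :
    Integrable (fun τ => abelKer (1 - α) (s - τ) * abelKer α (τ - σ)) := by
  rcases lt_or_ge σ s with h | h
  · -- a non-integrable function has Bochner integral zero, but this integral is positive
    refine not_imp_comm.1 integral_undef ?_
    rw [integral_abelKer_mul hα0 hα1 h]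
    exact (mul_pos (Real.Gamma_pos_of_pos hα0) (Real.Gamma_pos_of_pos (by linarith))).ne'
  · have : (fun τ => abelKer (1 - α) (s - τ) * abelKer α (τ - σ)) = fun _ => 0 := by
      funext τ
      rcases le_total τ σ with h' | h'
      · rw [abelKer_of_nonpos (x := τ - σ) (by linarith), mul_zero]
      · rw [abelKer_of_nonpos (x := s - τ) (by linarith), zero_mul]
    rw [this]
    exact integrable_zero _ _ _

/-- The semigroup law `I^{1-α} I^α = I^1`, obtained from Fubini and the Beta integral. -/
lemma integral_abel_comp {E : Type*} [NormedAddCommGroup E] [NormedSpace ℝ E] [CompleteSpace E]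
    {α : ℝ} (hα0 : 0 < α) (hα1 : α < 1) {s : ℝ} (hs : 0 ≤ s) {g : ℝ → E}
    (hg : IntegrableOn g (Ioc 0 s)) :
    ∫ τ in (0:ℝ)..s, ((s - τ) ^ (-α)) • ∫ σ in (0:ℝ)..τ, ((τ - σ) ^ (α - 1)) • g σ =
      (Real.Gamma α * Real.Gamma (1 - α)) • ∫ σ in (0:ℝ)..s, g σ := by
  set g0 : ℝ → E := (Ioc 0 s).indicator g with hg0
  have hg0i : Integrable g0 := (integrable_indicator_iff measurableSet_Ioc).2 hg
  set B := Real.Gamma α * Real.Gamma (1 - α) with hB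
  -- both iterated integrals become integrals over the whole line
  let F : ℝ → ℝ → E := fun τ σ => (abelKer (1 - α) (s - τ) * abelKer α (τ - σ)) • g0 σ
  have hFm : AEStronglyMeasurable (Function.uncurry F) (volume.prod volume) := by
    apply AEStronglyMeasurable.smul
    · apply Measurable.aestronglyMeasurable
      exact ((abelKer_measurable _).comp (measurable_const.sub measurable_fst)).mul
        ((abelKer_measurable _).comp (measurable_fst.sub measurable_snd))
    · exact hg0i.aestronglyMeasurable.comp_snd
  have hker : ∀ᵐ σ : ℝ,
      (∫ τ, abelKer (1 - α) (s - τ) * abelKer α (τ - σ)) • g0 σ = B • g0 σ := by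
    have hne : ∀ᵐ σ : ℝ, σ ≠ s := by simp [ae_iff, measure_singleton]
    filter_upwards [hne] with σ hσ
    rcases lt_or_gt_of_ne hσ with h | h
    · rw [integral_abelKer_mul hα0 hα1 h]
    · have : g0 σ = 0 := indicator_of_notMem (fun h' => absurd h'.2 (not_le.2 h)) _
      rw [this, smul_zero, smul_zero]
  have hFi : Integrable (Function.uncurry F) (volume.prod volume) := by
    rw [integrable_prod_iff' hFm]
    refine ⟨ae_of_all _ fun σ => ?_, ?_⟩
    · exact (integrable_abelKer_mul hα0 hα1 σ s).smul_const (g0 σ)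
    refine (hg0i.norm.const_mul B).congr ?_
    filter_upwards [hker] with σ hσ
    have h2 : ∀ τ, ‖Function.uncurry F (τ, σ)‖ =
        (abelKer (1 - α) (s - τ) * abelKer α (τ - σ)) * ‖g0 σ‖ := fun τ => by
      simp only [Function.uncurry, F]
      rw [norm_smul, Real.norm_of_nonneg (mul_nonneg (abelKer_nonneg _ _) (abelKer_nonneg _ _))]
    simp_rw [h2]
    rw [integral_mul_const]
    have h3 := congrArg norm hσ
    have hBp : 0 ≤ B :=
      (mul_pos (Real.Gamma_pos_of_pos hα0) (Real.Gamma_pos_of_pos (by linarith))).le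
    rw [norm_smul, norm_smul, Real.norm_of_nonneg hBp, Real.norm_of_nonneg
      (integral_nonneg fun τ => mul_nonneg (abelKer_nonneg _ _) (abelKer_nonneg _ _))] at h3
    exact h3.symm
  have hswap := integral_integral_swap hFi
  have hR : ∫ σ, ∫ τ, F τ σ = B • ∫ σ in (0:ℝ)..s, g σ := by
    rw [intervalIntegral.integral_of_le hs, ← integral_indicator measurableSet_Ioc,
      ← integral_smul]
    apply integral_congr_ae
    filter_upwards [hker] with σ hσ
    simp only [F]
    rw [integral_smul_const]
    exact hσ
  have hL : ∫ τ, ∫ σ, F τ σ =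
      ∫ τ in (0:ℝ)..s, ((s - τ) ^ (-α)) • ∫ σ in (0:ℝ)..τ, ((τ - σ) ^ (α - 1)) • g σ := by
    rw [intervalIntegral.integral_of_le hs, integral_Ioc_eq_integral_Ioo,
      ← integral_indicator measurableSet_Ioo]
    congr 1
    funext τ
    simp only [F, mul_smul]
    rw [integral_smul]
    by_cases hτ : τ ∈ Ioo 0 s
    · rw [indicator_of_mem hτ, abelKer_of_pos (by linarith [hτ.2])]
      congr 1
      · congr 1; ring
      rw [intervalIntegral.integral_of_le hτ.1.le, integral_Ioc_eq_integral_Ioo,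
        ← integral_indicator measurableSet_Ioo]
      congr 1
      funext σ
      by_cases hσ : σ ∈ Ioo 0 τ
      · rw [indicator_of_mem hσ, abelKer_of_pos (by linarith [hσ.2]), hg0, indicator_of_mem]
        exact ⟨hσ.1, (hσ.2.trans hτ.2).le⟩
      · rw [indicator_of_notMem hσ]
        rcases not_and_or.1 hσ with h | h
        · rw [hg0, indicator_of_notMem (fun h' => h h'.1), smul_zero]
        · rw [abelKer_of_nonpos (by linarith), zero_smul]
    · rw [indicator_of_notMem hτ]
      rcases not_and_or.1 hτ with h | h
      · have : (fun σ => abelKer α (τ - σ) • g0 σ) = fun _ => 0 := by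
          funext σ
          rcases le_or_gt σ 0 with h' | h'
          · rw [hg0, indicator_of_notMem (fun h'' => absurd h''.1 (not_lt.2 h')), smul_zero]
          · rw [abelKer_of_nonpos (by linarith), zero_smul]
        rw [this, integral_zero, smul_zero]
      · rw [abelKer_of_nonpos (by linarith), zero_smul]
  rw [← hL, hswap, hR]

/-- If `y = y 0 + I^α g` on `[0, T]` with `g` integrable, then the Caputo derivative of `y` is `g`
almost everywhere, by the semigroup law and the Lebesgue differentiation theorem. -/
lemma caputoD_ae_eq {E : Type*} [NormedAddCommGroup E] [NormedSpace ℝ E] [CompleteSpace E]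
    {α T : ℝ} (hα0 : 0 < α) (hα1 : α < 1) (hT : 0 < T) {g y : ℝ → E}
    (hg : IntegrableOn g (Icc 0 T))
    (hy : ∀ t ∈ Icc (0:ℝ) T, y t = y 0 + RLint α g t) :
    ∀ᵐ t ∂(volume.restrict (Icc (0:ℝ) T)), caputoD α y t = g t := by
  have hgi : IntervalIntegrable g volume 0 T :=
    (intervalIntegrable_iff_integrableOn_Icc_of_le hT.le).2 hg
  have hG0 := (Real.Gamma_pos_of_pos hα0).ne'
  have hG1 := (Real.Gamma_pos_of_pos (show 0 < 1 - α by linarith)).ne'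
  have key : ∀ s ∈ Icc (0:ℝ) T,
      (Real.Gamma (1 - α))⁻¹ • ∫ τ in (0:ℝ)..s, ((s - τ) ^ (-α)) • (y τ - y 0) =
        ∫ σ in (0:ℝ)..s, g σ := by
    intro s hs
    have h1 : ∫ τ in (0:ℝ)..s, ((s - τ) ^ (-α)) • (y τ - y 0) =
        ∫ τ in (0:ℝ)..s, (Real.Gamma α)⁻¹ •
          (((s - τ) ^ (-α)) • ∫ σ in (0:ℝ)..τ, ((τ - σ) ^ (α - 1)) • g σ) := by
      apply intervalIntegral.integral_congr
      intro τ hτ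
      rw [uIcc_of_le hs.1] at hτ
      dsimp only
      rw [hy τ ⟨hτ.1, hτ.2.trans hs.2⟩, add_sub_cancel_left, RLint, smul_comm]
    rw [h1, intervalIntegral.integral_smul, integral_abel_comp hα0 hα1 hs.1
      (hg.mono_set fun x hx => ⟨hx.1.le, hx.2.trans hs.2⟩), smul_smul, smul_smul]
    rw [show (Real.Gamma (1 - α))⁻¹ * (Real.Gamma α)⁻¹ * (Real.Gamma α * Real.Gamma (1 - α)) = 1 by
      field_simp, one_smul]
  have hne0 : ∀ᵐ t : ℝ, t ≠ 0 := by simp [ae_iff, measure_singleton]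
  have hneT : ∀ᵐ t : ℝ, t ≠ T := by simp [ae_iff, measure_singleton]
  rw [ae_restrict_iff' measurableSet_Icc]
  filter_upwards [hgi.ae_hasDerivAt_integral, hne0, hneT] with t ht h0 hT' htI
  rw [uIcc_of_le hT.le] at ht
  have hd := ht htI 0 ⟨le_rfl, hT.le⟩
  have hnh : Icc (0:ℝ) T ∈ 𝓝 t :=
    Icc_mem_nhds (lt_of_le_of_ne htI.1 h0.symm) (lt_of_le_of_ne htI.2 hT')
  rw [caputoD, ← hd.deriv]
  apply Filter.EventuallyEq.deriv_eq
  filter_upwards [hnh] with s hs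
  exact key s hs

/-! ### Gronwall inequality for the Abel kernel -/

lemma intervalIntegrable_abel {α : ℝ} (hα0 : 0 < α) (s t : ℝ) :
    IntervalIntegrable (fun τ : ℝ => (t - τ) ^ (α - 1)) volume s t := by
  have := (intervalIntegral.intervalIntegrable_rpow' (a := t - s) (b := 0)
    (show -1 < α - 1 by linarith)).comp_sub_left t
  simpa using this

lemma integral_abel {α : ℝ} (hα0 : 0 < α) (s t : ℝ) :
    ∫ τ in s..t, (t - τ) ^ (α - 1) = (t - s) ^ α / α := by
  rw [intervalIntegral.integral_comp_sub_left (fun x : ℝ => x ^ (α - 1)) t,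
    integral_rpow (Or.inl (by linarith)), sub_self]
  simp [Real.zero_rpow hα0.ne']

lemma integral_abel_exp_le {α l : ℝ} (hα0 : 0 < α) (hl : 0 < l) {s t : ℝ} (hst : s ≤ t) :
    ∫ τ in s..t, (t - τ) ^ (α - 1) * Real.exp (l * (τ - s)) ≤
      Real.exp (l * (t - s)) * (Real.Gamma α * l⁻¹ ^ α) := by
  have h1 : ∀ τ, (t - τ) ^ (α - 1) * Real.exp (l * (τ - s)) =
      Real.exp (l * (t - s)) * ((fun x : ℝ => x ^ (α - 1) * Real.exp (-(l * x))) (t - τ)) := by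
    intro τ
    rw [show l * (τ - s) = l * (t - s) + -(l * (t - τ)) by ring, Real.exp_add]
    ring
  simp_rw [h1]
  rw [intervalIntegral.integral_const_mul, intervalIntegral.integral_comp_sub_left
    (fun x : ℝ => x ^ (α - 1) * Real.exp (-(l * x))) t, sub_self]
  gcongr
  have h2 := Real.integral_rpow_mul_exp_neg_mul_Ioi hα0 hl
  have hi : IntegrableOn (fun x : ℝ => x ^ (α - 1) * Real.exp (-(l * x))) (Ioi 0) := by
    -- integrable because its Bochner integral is nonzero
    refine not_imp_comm.1 integral_undef ?_
    rw [h2]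
    have := Real.Gamma_pos_of_pos hα0
    positivity
  rw [intervalIntegral.integral_of_le (by linarith)]
  calc _ ≤ ∫ x in Ioi (0:ℝ), x ^ (α - 1) * Real.exp (-(l * x)) := by
        apply setIntegral_mono_set hi
        · filter_upwards [ae_restrict_mem measurableSet_Ioi] with x hx
          have : (0:ℝ) < x := hx
          simp only [Pi.zero_apply]
          positivity
        · exact (Ioc_subset_Ioi_self).eventuallyLE
    _ = _ := by rw [h2, one_div, mul_comm]

lemma intervalIntegrable_abel_smul {E : Type*} [NormedAddCommGroup E] [NormedSpace ℝ E]
    {α : ℝ} (hα0 : 0 < α) {s t C : ℝ} (hst : s ≤ t)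
    {G : ℝ → E} (hGm : AEStronglyMeasurable G (volume.restrict (Icc s t)))
    (hGC : ∀ᵐ τ ∂(volume.restrict (Icc s t)), ‖G τ‖ ≤ C) :
    IntervalIntegrable (fun τ : ℝ => (t - τ) ^ (α - 1) • G τ) volume s t := by
  have h := (intervalIntegrable_iff_integrableOn_Icc_of_le hst).1 (intervalIntegrable_abel hα0 s t)
  rw [intervalIntegrable_iff_integrableOn_Icc_of_le hst]
  exact h.smul_bdd C hGm hGC

lemma intervalIntegrable_abel_mul {α : ℝ} (hα0 : 0 < α) {s t C : ℝ} (hst : s ≤ t)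
    {G : ℝ → ℝ} (hGm : AEStronglyMeasurable G (volume.restrict (Icc s t)))
    (hGC : ∀ᵐ τ ∂(volume.restrict (Icc s t)), ‖G τ‖ ≤ C) :
    IntervalIntegrable (fun τ : ℝ => (t - τ) ^ (α - 1) * G τ) volume s t := by
  simpa only [smul_eq_mul] using intervalIntegrable_abel_smul hα0 hst hGm hGC

/-- A source bounded by a constant plus an exponential gives an Abel integral bounded by a power
plus the same exponential, the latter damped by `l ^ (-α)`. -/
lemma abel_integral_le {α l : ℝ} (hα0 : 0 < α) (hl : 0 < l) {s t C K B : ℝ} (hst : s ≤ t)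
    (hB : 0 ≤ B)
    {G : ℝ → ℝ} (hGm : AEStronglyMeasurable G (volume.restrict (Icc s t)))
    (hGC : ∀ᵐ τ ∂(volume.restrict (Icc s t)), ‖G τ‖ ≤ C)
    (hG : ∀ᵐ τ ∂(volume.restrict (Icc s t)), G τ ≤ K + B * Real.exp (l * (τ - s))) :
    (Real.Gamma α)⁻¹ * ∫ τ in s..t, (t - τ) ^ (α - 1) * G τ ≤
      K / Real.Gamma (α + 1) * (t - s) ^ α + B * l⁻¹ ^ α * Real.exp (l * (t - s)) := by
  have hΓ := Real.Gamma_pos_of_pos hα0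
  have hI1 := (intervalIntegrable_abel hα0 s t).const_mul K
  have hI2 : IntervalIntegrable (fun τ : ℝ => B * ((t - τ) ^ (α - 1) * Real.exp (l * (τ - s))))
      volume s t :=
    ((intervalIntegrable_abel hα0 s t).mul_continuousOn
      (by fun_prop)).const_mul B
  have h1 : ∫ τ in s..t, (t - τ) ^ (α - 1) * G τ ≤
      ∫ τ in s..t, (K * (t - τ) ^ (α - 1) +
        B * ((t - τ) ^ (α - 1) * Real.exp (l * (τ - s)))) := by
    apply intervalIntegral.integral_mono_ae_restrict hst
      (intervalIntegrable_abel_mul hα0 hst hGm hGC) (hI1.add hI2)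
    filter_upwards [hG, ae_restrict_mem measurableSet_Icc] with τ hτ hm
    have : 0 ≤ (t - τ) ^ (α - 1) := Real.rpow_nonneg (by linarith [hm.2]) _
    nlinarith [mul_le_mul_of_nonneg_left hτ this]
  rw [intervalIntegral.integral_add hI1 hI2, intervalIntegral.integral_const_mul,
    intervalIntegral.integral_const_mul, integral_abel hα0] at h1
  have h2 := integral_abel_exp_le hα0 hl hst
  calc _ ≤ (Real.Gamma α)⁻¹ * (K * ((t - s) ^ α / α) +
        B * (Real.exp (l * (t - s)) * (Real.Gamma α * l⁻¹ ^ α))) := by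
        gcongr
        exact h1.trans (by gcongr)
    _ = _ := by
        rw [Real.Gamma_add_one hα0.ne']
        field_simp

/-- A Gronwall inequality for the Abel kernel with delay. If `a ≤ N (t - s)^α e^{l (t - s)}`, then
the integral inequality improves the constant `N` to `K / Γ(α+1) + N / 2` as soon as
`4 L ≤ l ^ α`; iterating, the constant tends to the fixed point `2 K / Γ(α+1)`. -/
lemma abel_gronwall {α l : ℝ} (hα0 : 0 < α) (hl : 0 < l) {s t₁ C K L h : ℝ}
    (hL : 0 < L) (hlL : 4 * L ≤ l ^ α) (hh : 0 < h)
    {a G : ℝ → ℝ} (hGm : AEStronglyMeasurable G (volume.restrict (Icc s t₁)))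
    (hK : 0 ≤ K)
    (hGC : ∀ᵐ τ ∂(volume.restrict (Icc s t₁)), ‖G τ‖ ≤ C)
    (hG : ∀ᵐ τ ∂(volume.restrict (Icc s t₁)), G τ ≤ K + L * (a τ + a (τ - h)))
    (ha : ∀ t ∈ Icc s t₁, a t ≤ (Real.Gamma α)⁻¹ * ∫ τ in s..t, (t - τ) ^ (α - 1) * G τ)
    (ha0 : ∀ t ∈ Icc (s - h) s, a t = 0) :
    ∀ t ∈ Icc s t₁, a t ≤ 2 * K / Real.Gamma (α + 1) * (t - s) ^ α * Real.exp (l * (t - s)) := by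
  have hΓ1 := Real.Gamma_pos_of_pos (show 0 < α + 1 by linarith)
  set K' := K / Real.Gamma (α + 1) with hK'
  have hK'0 : 0 ≤ K' := by positivity
  set C' := |C| / Real.Gamma (α + 1) with hC'
  have hC'0 : 0 ≤ C' := by positivity
  have hsub : ∀ {t}, t ∈ Icc s t₁ → volume.restrict (Icc s t) ≤ volume.restrict (Icc s t₁) :=
    fun ht => Measure.restrict_mono (Icc_subset_Icc_right ht.2) le_rfl
  have main : ∀ k : ℕ, ∀ t ∈ Icc s t₁,
      a t ≤ (2 * K' + C' * (1 / 2) ^ k) * (t - s) ^ α * Real.exp (l * (t - s)) := by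
    intro k
    induction k with
    | zero =>
      intro t ht
      have hts : 0 ≤ t - s := by linarith [ht.1]
      have h1 := abel_integral_le (K := |C|) (B := 0) hα0 hl ht.1 le_rfl
        (hGm.mono_measure (hsub ht)) (ae_mono (hsub ht) hGC) (by
          filter_upwards [ae_mono (hsub ht) hGC] with τ hτ
          rw [zero_mul, add_zero]
          exact (le_abs_self _).trans (hτ.trans (le_abs_self _)))
      rw [zero_mul, zero_mul, add_zero] at h1
      refine (ha t ht).trans (h1.trans ?_)
      have he : 1 ≤ Real.exp (l * (t - s)) := Real.one_le_exp (by positivity)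
      have hp : 0 ≤ (t - s) ^ α := Real.rpow_nonneg hts _
      calc C' * (t - s) ^ α ≤ (2 * K' + C' * (1 / 2) ^ 0) * (t - s) ^ α := by
            gcongr; simp; linarith
        _ ≤ _ := le_mul_of_one_le_right (by positivity) he
    | succ k ih =>
      intro t ht
      have hts : 0 ≤ t - s := by linarith [ht.1]
      set N := 2 * K' + C' * (1 / 2) ^ k with hN
      have hN0 : 0 ≤ N := by positivity
      have hp : 0 ≤ (t - s) ^ α := Real.rpow_nonneg hts _
      have hb : ∀ τ ∈ Icc s t, ∀ x, s - h ≤ x → x ≤ τ →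
          a x ≤ N * (t - s) ^ α * Real.exp (l * (τ - s)) := by
        intro τ hτ x hx hxτ
        rcases le_total x s with hxs | hxs
        · rw [ha0 x ⟨hx, hxs⟩]; positivity
        · refine (ih x ⟨hxs, hxτ.trans (hτ.2.trans ht.2)⟩).trans ?_
          have : 0 ≤ x - s := by linarith
          have := hτ.2
          gcongr
          linarith
      have h1 := abel_integral_le (K := K) (B := 2 * L * (N * (t - s) ^ α)) hα0 hl ht.1
        (by positivity) (hGm.mono_measure (hsub ht)) (ae_mono (hsub ht) hGC) (by
          filter_upwards [ae_mono (hsub ht) hG, ae_restrict_mem measurableSet_Icc] with τ hτ hm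
          have e1 := hb τ hm τ (by linarith [hm.1]) le_rfl
          have e2 := hb τ hm (τ - h) (by linarith [hm.1]) (by linarith)
          nlinarith)
      refine (ha t ht).trans (h1.trans ?_)
      have he : 1 ≤ Real.exp (l * (t - s)) := Real.one_le_exp (by positivity)
      have hl2 : 2 * L * l⁻¹ ^ α ≤ 1 / 2 := by
        rw [Real.inv_rpow hl.le]
        have : 0 < l ^ α := Real.rpow_pos_of_pos hl _
        rw [← div_eq_mul_inv, div_le_iff₀ this]
        linarith
      calc K' * (t - s) ^ α + 2 * L * (N * (t - s) ^ α) * l⁻¹ ^ α * Real.exp (l * (t - s))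
          = K' * (t - s) ^ α * 1 +
            (2 * L * l⁻¹ ^ α) * (N * (t - s) ^ α * Real.exp (l * (t - s))) := by ring
        _ ≤ K' * (t - s) ^ α * Real.exp (l * (t - s)) +
            (1 / 2) * (N * (t - s) ^ α * Real.exp (l * (t - s))) := by gcongr
        _ = _ := by rw [hN]; ring
  intro t ht
  have hlim : Tendsto (fun k : ℕ =>
      (2 * K' + C' * (1 / 2) ^ k) * (t - s) ^ α * Real.exp (l * (t - s))) atTop
      (𝓝 ((2 * K' + C' * 0) * (t - s) ^ α * Real.exp (l * (t - s)))) := by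
    have h0 : Tendsto (fun k : ℕ => (1 / 2 : ℝ) ^ k) atTop (𝓝 0) :=
      tendsto_pow_atTop_nhds_zero_of_lt_one (by norm_num) (by norm_num)
    exact (((h0.const_mul C').const_add _).mul_const _).mul_const _
  have := ge_of_tendsto' hlim (fun k => main k t ht)
  rw [mul_zero, add_zero] at this
  rw [mul_div_assoc]
  exact this

/-! ### Trajectories and the spike variation -/

/-- An admissible trajectory satisfies the Volterra equation with density
`g = f(·, y, y(· - h), u)` a.e. -/
lemma Admissible.exists_density {n r : ℕ} {α T h : ℝ} (hα0 : 0 < α) (hα1 : α < 1) (hT : 0 < T)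
    {f : ℝ → (Fin n → ℝ) → (Fin n → ℝ) → (Fin r → ℝ) → (Fin n → ℝ)}
    {U : Set (Fin r → ℝ)} {y₀ : Fin n → ℝ} {φini : ℝ → (Fin n → ℝ)}
    {u : ℝ → (Fin r → ℝ)} {y : ℝ → (Fin n → ℝ)} (H : Admissible α T h f U y₀ φini u y) :
    ∃ g : ℝ → (Fin n → ℝ), AEStronglyMeasurable g (volume.restrict (Icc (0:ℝ) T)) ∧
      (∃ C : ℝ, ∀ᵐ t ∂(volume.restrict (Icc (0:ℝ) T)), ‖g t‖ ≤ C) ∧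
      (∀ t ∈ Icc (0:ℝ) T, y t = y₀ + RLint α g t) ∧
      ∀ᵐ t ∂(volume.restrict (Icc (0:ℝ) T)), g t = f t (y t) (y (t - h)) (u t) := by
  obtain ⟨-, -, ⟨g, hgm, ⟨C, hC⟩, hy⟩, hD, h0, -⟩ := H
  have hgi : IntegrableOn g (Icc 0 T) :=
    Integrable.of_bound hgm C hC
  refine ⟨g, hgm, ⟨C, hC⟩, fun t ht => h0 ▸ hy t ht, ?_⟩
  filter_upwards [hD, caputoD_ae_eq hα0 hα1 hT hgi hy] with t h1 h2
  rw [← h2, h1]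

lemma norm_RLint_sub_le {E : Type*} [NormedAddCommGroup E] [NormedSpace ℝ E]
    {α : ℝ} (hα0 : 0 < α) {t C₁ C₂ : ℝ} (ht : 0 ≤ t) {g₁ g₂ : ℝ → E}
    (hm₁ : AEStronglyMeasurable g₁ (volume.restrict (Icc 0 t)))
    (hC₁ : ∀ᵐ τ ∂(volume.restrict (Icc 0 t)), ‖g₁ τ‖ ≤ C₁)
    (hm₂ : AEStronglyMeasurable g₂ (volume.restrict (Icc 0 t)))
    (hC₂ : ∀ᵐ τ ∂(volume.restrict (Icc 0 t)), ‖g₂ τ‖ ≤ C₂) :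
    ‖RLint α g₁ t - RLint α g₂ t‖ ≤
      (Real.Gamma α)⁻¹ * ∫ τ in (0:ℝ)..t, (t - τ) ^ (α - 1) * ‖g₁ τ - g₂ τ‖ := by
  have hΓ := Real.Gamma_pos_of_pos hα0
  rw [RLint, RLint, ← smul_sub, ← intervalIntegral.integral_sub
    (intervalIntegrable_abel_smul hα0 ht hm₁ hC₁) (intervalIntegrable_abel_smul hα0 ht hm₂ hC₂),
    norm_smul, Real.norm_of_nonneg (by positivity)]
  gcongr
  refine (intervalIntegral.norm_integral_le_integral_norm ht).trans (le_of_eq ?_)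
  apply intervalIntegral.integral_congr
  intro τ hτ
  rw [uIcc_of_le ht] at hτ
  dsimp only
  rw [← smul_sub, norm_smul, Real.norm_of_nonneg (Real.rpow_nonneg (by linarith [hτ.2]) _)]

/-- spike-variation trajectory estimate: under (C1), for the spike variation
`u_ε` of an admissible process `(u, y)` at a point `θ`, the perturbed trajectory `y_ε`
coincides with `y` on `[−h, θ]`, and there is `M > 0` independent of `ε` such that
`‖Δy(t)‖ ≤ (M K(v)/Γ(α+1)) (t−θ)^α` on `[θ, θ+ε]`; in particular
`‖Δy(t)‖ ≤ (M K(v)/Γ(α+1)) ε^α` there. -/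
theorem spike_variation_estimate {n r : ℕ} (α T h : ℝ)
    (hα0 : 0 < α) (hα1 : α < 1) (hT : 0 < T) (hh : 0 < h)
    (f : ℝ → (Fin n → ℝ) → (Fin n → ℝ) → (Fin r → ℝ) → (Fin n → ℝ))
    (L : ℝ) (hL : 0 < L)
    (hC1 : ∀ t ∈ Icc (0:ℝ) T, ∀ (y₁ y₂ yh₁ yh₂ : Fin n → ℝ) (u₁ u₂ : Fin r → ℝ),
      ‖f t y₁ yh₁ u₁ - f t y₂ yh₂ u₂‖ ≤ L * (‖y₁ - y₂‖ + ‖yh₁ - yh₂‖ + ‖u₁ - u₂‖))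
    (hC1b : ∀ t ∈ Icc (0:ℝ) T, ‖f t 0 0 0‖ ≤ L)
    (U : Set (Fin r → ℝ)) (hU : IsCompact U)
    (y₀ : Fin n → ℝ) (φini : ℝ → (Fin n → ℝ))
    (u : ℝ → (Fin r → ℝ)) (y : ℝ → (Fin n → ℝ))
    (hadm : Admissible α T h f U y₀ φini u y)
    (v : Fin r → ℝ) (hv : v ∈ U) (θ : ℝ) (hθ : θ ∈ Ico (0:ℝ) T)
    (K : ℝ)
    (hK : ∀ᵐ t ∂(volume.restrict (Icc (0:ℝ) T)),
      ‖f t (y t) (y (t - h)) v - f t (y t) (y (t - h)) (u t)‖ ≤ K) :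
    ∃ M : ℝ, 0 < M ∧
      ∀ ε : ℝ, 0 < ε → θ + ε < T →
        ∀ yε : ℝ → (Fin n → ℝ),
          Admissible α T h f U y₀ φini (spike u v θ ε) yε →
          (∀ t ∈ Icc (-h) θ, yε t - y t = 0) ∧
          (∀ t ∈ Icc θ (θ + ε),
            ‖yε t - y t‖ ≤ M * K / Real.Gamma (α + 1) * (t - θ) ^ α) ∧
          (∀ t ∈ Icc θ (θ + ε),
            ‖yε t - y t‖ ≤ M * K / Real.Gamma (α + 1) * ε ^ α) := by
  have hΓ1 := Real.Gamma_pos_of_pos (show 0 < α + 1 by linarith)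
  -- the exponential weight is chosen so that `4 L ≤ l ^ α`, which halves the Gronwall constant
  set l : ℝ := (4 * L) ^ α⁻¹ with hl_def
  have hl : 0 < l := by positivity
  have hlL : 4 * L ≤ l ^ α := by
    rw [hl_def, Real.rpow_inv_rpow (by positivity) hα0.ne']
  have hK0 : 0 ≤ K := by
    have : (ae (volume.restrict (Icc (0:ℝ) T))).NeBot := by
      rw [ae_neBot]
      intro h0
      have := congrArg (fun μ => μ univ) h0
      simp at this
      linarith
    obtain ⟨t, ht⟩ := hK.exists
    exact (norm_nonneg _).trans ht
  refine ⟨2 * Real.exp (l * T), by positivity, ?_⟩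
  intro ε hε hεT yε hadmε
  obtain ⟨g₁, hm₁, ⟨C₁, hC₁⟩, hy₁, hf₁⟩ := hadmε.exists_density hα0 hα1 hT
  obtain ⟨g₂, hm₂, ⟨C₂, hC₂⟩, hy₂, hf₂⟩ := hadm.exists_density hα0 hα1 hT
  obtain ⟨-, -, -, -, hε0, hεini⟩ := hadmε
  obtain ⟨-, -, -, -, h0, hini⟩ := hadm
  set a : ℝ → ℝ := fun t => ‖yε t - y t‖ with ha_def
  set G : ℝ → ℝ := fun t => ‖g₁ t - g₂ t‖ with hG_def
  have hsub : ∀ {s t : ℝ}, 0 ≤ s → t ≤ T →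
      volume.restrict (Icc s t) ≤ volume.restrict (Icc 0 T) :=
    fun hs ht => Measure.restrict_mono (Icc_subset_Icc hs ht) le_rfl
  have hGm : AEStronglyMeasurable G (volume.restrict (Icc 0 T)) := (hm₁.sub hm₂).norm
  have hGC : ∀ᵐ t ∂(volume.restrict (Icc (0:ℝ) T)), ‖G t‖ ≤ C₁ + C₂ := by
    filter_upwards [hC₁, hC₂] with t h1 h2
    rw [hG_def, norm_norm]
    exact (norm_sub_le _ _).trans (add_le_add h1 h2)
  have haG : ∀ t ∈ Icc (0:ℝ) T,
      a t ≤ (Real.Gamma α)⁻¹ * ∫ τ in (0:ℝ)..t, (t - τ) ^ (α - 1) * G τ := by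
    intro t ht
    have h1 := norm_RLint_sub_le hα0 ht.1 (hm₁.mono_measure (hsub le_rfl ht.2))
      (ae_mono (hsub le_rfl ht.2) hC₁) (hm₂.mono_measure (hsub le_rfl ht.2))
      (ae_mono (hsub le_rfl ht.2) hC₂)
    have h2 : yε t - y t = RLint α g₁ t - RLint α g₂ t := by
      rw [hy₁ t ht, hy₂ t ht, add_sub_add_left_eq_sub]
    rw [ha_def]
    dsimp only
    rw [h2]
    exact h1
  -- the state part of the defect is Lipschitz; the control part lives on `[θ, θ + ε)`
  have hGb : ∀ᵐ t ∂(volume.restrict (Icc (0:ℝ) T)),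
      G t ≤ (if θ ≤ t then K else 0) + L * (a t + a (t - h)) := by
    filter_upwards [hf₁, hf₂, hK, ae_restrict_mem measurableSet_Icc] with t e1 e2 e3 ht
    have h1 := hC1 t ht (yε t) (y t) (yε (t - h)) (y (t - h)) (spike u v θ ε t) (spike u v θ ε t)
    rw [sub_self, norm_zero, add_zero] at h1
    have h2 : ‖f t (y t) (y (t - h)) (spike u v θ ε t) - f t (y t) (y (t - h)) (u t)‖ ≤
        if θ ≤ t then K else 0 := by
      unfold spike
      split_ifs with h3 h4 h4
      · exact e3
      · exact absurd h3.1 h4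
      · simpa using hK0
      · simp
    have h3 := norm_sub_le_norm_sub_add_norm_sub (f t (yε t) (yε (t - h)) (spike u v θ ε t))
      (f t (y t) (y (t - h)) (spike u v θ ε t)) (f t (y t) (y (t - h)) (u t))
    rw [hG_def]
    dsimp only
    rw [e1, e2]
    linarith
  have hneg : ∀ t ∈ Icc (-h) (0:ℝ), a t = 0 := by
    intro t ht
    rw [ha_def]
    dsimp only
    rcases ht.2.lt_or_eq with h' | h'
    · rw [hεini t ⟨ht.1, h'⟩, hini t ⟨ht.1, h'⟩, sub_self, norm_zero]
    · rw [h', hε0, h0, sub_self, norm_zero]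
  have hne : ∀ᵐ t : ℝ, t ≠ θ := by simp [ae_iff, measure_singleton]
  have hpast : ∀ t ∈ Icc (-h) θ, a t = 0 := by
    intro t ht
    rcases le_total t 0 with h' | h'
    · exact hneg t ⟨ht.1, h'⟩
    · have h1 := abel_gronwall (K := 0) hα0 hl hL hlL hh
        (hGm.mono_measure (hsub le_rfl hθ.2.le)) le_rfl
        (ae_mono (hsub le_rfl hθ.2.le) hGC) (by
          filter_upwards [ae_mono (hsub le_rfl hθ.2.le) hGb, ae_restrict_of_ae hne,
            ae_restrict_mem measurableSet_Icc] with τ hτ hne' hm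
          rwa [if_neg (not_le.2 (lt_of_le_of_ne hm.2 hne'))] at hτ)
        (fun s hs => haG s ⟨hs.1, hs.2.trans hθ.2.le⟩) (by simpa using hneg) t ⟨h', ht.2⟩
      simp only [mul_zero, zero_div, zero_mul] at h1
      exact le_antisymm h1 (norm_nonneg _)
  -- the defect vanishes before `θ`, so the Volterra inequality restarts at `θ`
  have hG0 : ∀ᵐ t ∂(volume.restrict (Icc (0:ℝ) θ)), G t = 0 := by
    filter_upwards [ae_mono (hsub le_rfl hθ.2.le) hGb, ae_restrict_of_ae hne,
      ae_restrict_mem measurableSet_Icc] with τ hτ hne' hm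
    rw [if_neg (not_le.2 (lt_of_le_of_ne hm.2 hne')), hpast τ ⟨by linarith [hm.1], hm.2⟩,
      hpast (τ - h) ⟨by linarith [hm.1], by linarith [hm.2]⟩] at hτ
    exact le_antisymm (by simpa using hτ) (norm_nonneg _)
  have haθ : ∀ t ∈ Icc θ (θ + ε),
      a t ≤ (Real.Gamma α)⁻¹ * ∫ τ in θ..t, (t - τ) ^ (α - 1) * G τ := by
    intro t ht
    have htT : t ≤ T := ht.2.trans hεT.le
    have ht0 : 0 ≤ t := hθ.1.trans ht.1
    have hI := intervalIntegrable_abel_mul hα0 ht0 (hGm.mono_measure (hsub le_rfl htT))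
      (ae_mono (hsub le_rfl htT) hGC)
    have hI1 := hI.mono_set (c := 0) (d := θ) (by
      rw [uIcc_of_le hθ.1, uIcc_of_le ht0]; exact Icc_subset_Icc_right ht.1)
    have hI2 := hI.mono_set (c := θ) (d := t) (by
      rw [uIcc_of_le ht.1, uIcc_of_le ht0]; exact Icc_subset_Icc_left hθ.1)
    have hz : ∫ τ in (0:ℝ)..θ, (t - τ) ^ (α - 1) * G τ = 0 := by
      rw [intervalIntegral.integral_of_le hθ.1, ← integral_Icc_eq_integral_Ioc]
      apply integral_eq_zero_of_ae
      filter_upwards [hG0] with τ hτ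
      rw [hτ, mul_zero]; rfl
    have := haG t ⟨ht0, htT⟩
    rwa [← intervalIntegral.integral_add_adjacent_intervals hI1 hI2, hz, zero_add] at this
  have hbound : ∀ t ∈ Icc θ (θ + ε),
      a t ≤ 2 * Real.exp (l * T) * K / Real.Gamma (α + 1) * (t - θ) ^ α := by
    intro t ht
    have h1 := abel_gronwall (K := K) hα0 hl hL hlL hh
      (hGm.mono_measure (hsub hθ.1 hεT.le)) hK0 (ae_mono (hsub hθ.1 hεT.le) hGC) (by
        filter_upwards [ae_mono (hsub hθ.1 hεT.le) hGb,
          ae_restrict_mem measurableSet_Icc] with τ hτ hm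
        rwa [if_pos hm.1] at hτ) haθ
      (fun s hs => hpast s ⟨by linarith [hs.1, hθ.1], hs.2⟩) t ht
    have hp : 0 ≤ (t - θ) ^ α := Real.rpow_nonneg (by linarith [ht.1]) _
    have hle : t - θ ≤ T := by linarith [ht.2, hθ.1]
    calc a t ≤ 2 * K / Real.Gamma (α + 1) * (t - θ) ^ α * Real.exp (l * (t - θ)) := h1
      _ ≤ 2 * K / Real.Gamma (α + 1) * (t - θ) ^ α * Real.exp (l * T) := by gcongr
      _ = _ := by ring
  refine ⟨fun t ht => norm_eq_zero.1 (hpast t ht), hbound, fun t ht => (hbound t ht).trans ?_⟩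
  have h1 : 0 ≤ t - θ := by linarith [ht.1]
  have h2 : t - θ ≤ ε := by linarith [ht.2]
  gcongr
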